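/- Completeness of RQmbC with respect to BALFI semantics: for every set Γ ∪ {φ} of sentences (closed formulas) over Ω, if Γ ⊨_RQmbC φ then Γ ⊢_RQmbC φ. -/

import Mathlib

namespace LFI

/-- The conditions making unary operations `nB` (¬) and `cB` (∘) on a Boolean algebra
into LFI operators: `a ∨ ¬a = 1` and `a ∧ ¬a ∧ ∘a = 0`.  A BALFI is a Boolean algebra
equipped with two such operations. -/
def IsBALFI {A : Type*} [BooleanAlgebra A] (nB cB : A → A) : Prop :=
  (∀ a : A, a ⊔ nB a = ⊤) ∧ (∀ a : A, a ⊓ nB a ⊓ cB a = ⊥)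

end LFI

namespace LFI

/-- First-order terms over a signature with individual constants `C` and
`n`-ary function symbols `F n`; variables are indexed by ℕ. -/
inductive FTerm (C : Type) (F : ℕ → Type) : Type
  | var : ℕ → FTerm C F
  | const : C → FTerm C F
  | func : {n : ℕ} → F n → (Fin n → FTerm C F) → FTerm C F

namespace FTerm

variable {C : Type} {F : ℕ → Type}

/-- The set of variables occurring in a term. -/
def vars : FTerm C F → Set ℕ
  | var x => {x}
  | const _ => ∅
  | func _ ts => ⋃ i, (ts i).vars

/-- Substitution of the term `t` for the variable `z` in a term. -/
def tsubst (z : ℕ) (t : FTerm C F) : FTerm C F → FTerm C F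
  | var x => if x = z then t else var x
  | const c => const c
  | func f ts => func f (fun i => tsubst z t (ts i))

end FTerm

/-- First-order formulas over the signature Ω extending Σ = {∧,∨,→,¬,∘} with
constants `C`, function symbols `F` and predicate symbols `P` (arity-indexed). -/
inductive FForm (C : Type) (F P : ℕ → Type) : Type
  | rel : {n : ℕ} → P n → (Fin n → FTerm C F) → FForm C F P
  | and : FForm C F P → FForm C F P → FForm C F P
  | or : FForm C F P → FForm C F P → FForm C F P
  | imp : FForm C F P → FForm C F P → FForm C F P
  | neg : FForm C F P → FForm C F P
  | circ : FForm C F P → FForm C F P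
  | all : ℕ → FForm C F P → FForm C F P
  | ex : ℕ → FForm C F P → FForm C F P

namespace FForm

variable {C : Type} {F P : ℕ → Type}

/-- `α ↔ β` abbreviates `(α→β) ∧ (β→α)`. -/
def iffF (a b : FForm C F P) : FForm C F P := and (imp a b) (imp b a)

/-- Conjunction of the nonempty list `γ :: l` (right-associated). -/
def conjL (γ : FForm C F P) : List (FForm C F P) → FForm C F P
  | [] => γ
  | ψ :: l => and γ (conjL ψ l)

/-- The set of free variables of a formula. -/
def fv : FForm C F P → Set ℕ
  | rel _ ts => ⋃ i, (ts i).vars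
  | and a b => fv a ∪ fv b
  | or a b => fv a ∪ fv b
  | imp a b => fv a ∪ fv b
  | neg a => fv a
  | circ a => fv a
  | all x a => fv a \ {x}
  | ex x a => fv a \ {x}

/-- `subst z t φ` is `φ[z/t]`: substitution of the term `t` for every free
occurrence of the variable `z` in `φ`. -/
def subst (z : ℕ) (t : FTerm C F) : FForm C F P → FForm C F P
  | rel p ts => rel p (fun i => FTerm.tsubst z t (ts i))
  | and a b => and (subst z t a) (subst z t b)
  | or a b => or (subst z t a) (subst z t b)
  | imp a b => imp (subst z t a) (subst z t b)
  | neg a => neg (subst z t a)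
  | circ a => circ (subst z t a)
  | all x a => if x = z then all x a else all x (subst z t a)
  | ex x a => if x = z then ex x a else ex x (subst z t a)

/-- The term `t` is free for the variable `z` in the formula: no variable of `t`
becomes bound when `t` is substituted for the free occurrences of `z`. -/
def FreeFor (t : FTerm C F) (z : ℕ) : FForm C F P → Prop
  | rel _ _ => True
  | and a b => FreeFor t z a ∧ FreeFor t z b
  | or a b => FreeFor t z a ∧ FreeFor t z b
  | imp a b => FreeFor t z a ∧ FreeFor t z b
  | neg a => FreeFor t z a
  | circ a => FreeFor t z a
  | all x a => z ∉ fv (all x a) ∨ (x ∉ t.vars ∧ FreeFor t z a)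
  | ex x a => z ∉ fv (ex x a) ∨ (x ∉ t.vars ∧ FreeFor t z a)

end FForm

open FForm

/-- Theoremhood in the Hilbert calculus RQmbC over the signature Ω: the axioms and
rules of RmbC together with (Ax∀), (Ax∃), (∀-In) and (∃-In). -/
inductive QPrf {C : Type} {F P : ℕ → Type} : FForm C F P → Prop
  | ax1 (a b : FForm C F P) : QPrf (imp a (imp b a))
  | ax2 (a b c : FForm C F P) :
      QPrf (imp (imp a (imp b c)) (imp (imp a b) (imp a c)))
  | ax3 (a b : FForm C F P) : QPrf (imp a (imp b (and a b)))
  | ax4 (a b : FForm C F P) : QPrf (imp (and a b) a)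
  | ax5 (a b : FForm C F P) : QPrf (imp (and a b) b)
  | ax6 (a b : FForm C F P) : QPrf (imp a (or a b))
  | ax7 (a b : FForm C F P) : QPrf (imp b (or a b))
  | ax8 (a b c : FForm C F P) :
      QPrf (imp (imp a c) (imp (imp b c) (imp (or a b) c)))
  | ax9 (a b : FForm C F P) : QPrf (or (imp a b) a)
  | ax10 (a : FForm C F P) : QPrf (or a (neg a))
  | bc1 (a b : FForm C F P) : QPrf (imp (circ a) (imp a (imp (neg a) b)))
  | mp {a b : FForm C F P} : QPrf (imp a b) → QPrf a → QPrf b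
  | rneg {a b : FForm C F P} : QPrf (iffF a b) → QPrf (iffF (neg a) (neg b))
  | rcirc {a b : FForm C F P} : QPrf (iffF a b) → QPrf (iffF (circ a) (circ b))
  | axAll (x : ℕ) (t : FTerm C F) (a : FForm C F P) :
      FreeFor t x a → QPrf (imp (all x a) (subst x t a))
  | axEx (x : ℕ) (t : FTerm C F) (a : FForm C F P) :
      FreeFor t x a → QPrf (imp (subst x t a) (ex x a))
  | allIn {a b : FForm C F P} (x : ℕ) :
      QPrf (imp a b) → x ∉ fv a → QPrf (imp a (all x b))
  | exIn {a b : FForm C F P} (x : ℕ) :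
      QPrf (imp a b) → x ∉ fv b → QPrf (imp (ex x a) b)

/-- Local derivation from premises in RQmbC. -/
def QDeriv {C : Type} {F P : ℕ → Type} (Γ : Set (FForm C F P)) (φ : FForm C F P) : Prop :=
  QPrf φ ∨ ∃ (γ : FForm C F P) (l : List (FForm C F P)),
    γ ∈ Γ ∧ (∀ ψ ∈ l, ψ ∈ Γ) ∧ QPrf (imp (conjL γ l) φ)

/-- Denotation of a term in a structure with domain `U`, under the assignment `μ`. -/
def tden {C : Type} {F : ℕ → Type} {U : Type} (iC : C → U)
    (iF : ∀ n, F n → (Fin n → U) → U) (μ : ℕ → U) : FTerm C F → U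
  | .var x => μ x
  | .const c => iC c
  | .func f ts => iF _ f (fun i => tden iC iF μ (ts i))

/-- Interpretation map of first-order formulas in a structure `⟨U, B, I⟩` over a
complete BALFI `B` (with LFI operators `nB`, `cB`), under an assignment:
quantifiers are interpreted as infima/suprema over all x-variants. -/
def fint {C : Type} {F P : ℕ → Type} {U A : Type} [CompleteBooleanAlgebra A]
    (nB cB : A → A) (iC : C → U) (iF : ∀ n, F n → (Fin n → U) → U)
    (iP : ∀ n, P n → (Fin n → U) → A) : FForm C F P → (ℕ → U) → A
  | .rel p ts, μ => iP _ p (fun i => tden iC iF μ (ts i))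
  | .and a b, μ => fint nB cB iC iF iP a μ ⊓ fint nB cB iC iF iP b μ
  | .or a b, μ => fint nB cB iC iF iP a μ ⊔ fint nB cB iC iF iP b μ
  | .imp a b, μ => (fint nB cB iC iF iP a μ)ᶜ ⊔ fint nB cB iC iF iP b μ
  | .neg a, μ => nB (fint nB cB iC iF iP a μ)
  | .circ a, μ => cB (fint nB cB iC iF iP a μ)
  | .all x a, μ => ⨅ u : U, fint nB cB iC iF iP a (Function.update μ x u)
  | .ex x a, μ => ⨆ u : U, fint nB cB iC iF iP a (Function.update μ x u)

/-- `φ` is valid in RQmbC: it takes value `⊤` under every assignment in every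
structure (over any nonempty domain and any complete BALFI). -/
def QValid {C : Type} {F P : ℕ → Type} (φ : FForm C F P) : Prop :=
  ∀ (U : Type), Nonempty U → ∀ (A : Type) [CompleteBooleanAlgebra A],
    ∀ nB cB : A → A, IsBALFI nB cB →
    ∀ (iC : C → U) (iF : ∀ n, F n → (Fin n → U) → U) (iP : ∀ n, P n → (Fin n → U) → A),
    ∀ μ : ℕ → U, fint nB cB iC iF iP φ μ = ⊤

/-- Local (degree-preserving) semantical consequence for RQmbC w.r.t. BALFI semantics. -/
def QConseq {C : Type} {F P : ℕ → Type} (Γ : Set (FForm C F P)) (φ : FForm C F P) : Prop :=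
  QValid φ ∨ ∃ (γ : FForm C F P) (l : List (FForm C F P)),
    γ ∈ Γ ∧ (∀ ψ ∈ l, ψ ∈ Γ) ∧ QValid (imp (conjL γ l) φ)


/-! ## Propositional part -/

section Completeness

variable {C : Type} {F P : ℕ → Type}

namespace QPrf

variable {a b c d : FForm C F P}

theorem idd (a : FForm C F P) : QPrf (imp a a) :=
  mp (mp (ax2 a (imp a a) a) (ax1 _ _)) (ax1 _ _)

theorem kk (h : QPrf b) : QPrf (imp a b) := mp (ax1 _ _) h

theorem ss (h : QPrf (imp a (imp b c))) (h' : QPrf (imp a b)) : QPrf (imp a c) :=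
  mp (mp (ax2 _ _ _) h) h'

theorem tr (h : QPrf (imp a b)) (h' : QPrf (imp b c)) : QPrf (imp a c) := ss (kk h') h

theorem andI (h : QPrf (imp c a)) (h' : QPrf (imp c b)) : QPrf (imp c (and a b)) :=
  ss (tr h (ax3 _ _)) h'

theorem curry (h : QPrf (imp (and c a) b)) : QPrf (imp c (imp a b)) :=
  tr (ax3 c a) (mp (ax2 _ _ _) (kk h))

theorem uncurry (h : QPrf (imp c (imp a b))) : QPrf (imp (and c a) b) :=
  ss (tr (ax4 _ _) h) (ax5 _ _)

theorem flip (h : QPrf (imp c (imp a b))) : QPrf (imp a (imp c b)) :=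
  curry (tr (andI (ax5 _ _) (ax4 _ _)) (uncurry h))

theorem orE (h : QPrf (imp a c)) (h' : QPrf (imp b c)) : QPrf (imp (or a b) c) :=
  mp (mp (ax8 _ _ _) h) h'

theorem iffI (h : QPrf (imp a b)) (h' : QPrf (imp b a)) : QPrf (iffF a b) :=
  mp (mp (ax3 _ _) h) h'

theorem iff1 (h : QPrf (iffF a b)) : QPrf (imp a b) := mp (ax4 _ _) h
theorem iff2 (h : QPrf (iffF a b)) : QPrf (imp b a) := mp (ax5 _ _) h

end QPrf

/-- A bottom formula. -/
def botF (β : FForm C F P) : FForm C F P := and β (and (neg β) (circ β))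

/-- Classical negation. -/
def cn (β a : FForm C F P) : FForm C F P := imp a (botF β)

open QPrf

variable {a b c d β : FForm C F P}

theorem contraF (a d : FForm C F P) : QPrf (imp (and a (and (neg a) (circ a))) d) := by
  have h1 : QPrf (imp (and a (and (neg a) (circ a))) a) := ax4 _ _
  have h2 : QPrf (imp (and a (and (neg a) (circ a))) (neg a)) := tr (ax5 _ _) (ax4 _ _)
  have h3 : QPrf (imp (and a (and (neg a) (circ a))) (circ a)) := tr (ax5 _ _) (ax5 _ _)
  exact ss (ss (tr h3 (bc1 a d)) h1) h2

theorem botE (d : FForm C F P) : QPrf (imp (botF β) d) := contraF β d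

theorem dne : QPrf (imp (cn β (cn β a)) a) := by
  have h : QPrf (or (imp a (botF β)) a) := ax9 _ _
  have h1 : QPrf (imp (imp a (botF β)) (imp (cn β (cn β a)) a)) := by
    apply curry
    exact tr (ss (ax5 _ _) (ax4 _ _)) (botE _)
  exact mp (orE h1 (ax1 _ _)) h

theorem dni : QPrf (imp a (cn β (cn β a))) := flip (idd _)

theorem cn_anti (h : QPrf (imp a b)) : QPrf (imp (cn β b) (cn β a)) :=
  curry (ss (ax4 _ _) (tr (ax5 _ _) h))

theorem or_iff1 : QPrf (imp (or a b) (cn β (and (cn β a) (cn β b)))) := by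
  refine orE ?_ ?_
  · exact flip (ax4 _ _)
  · exact flip (ax5 _ _)

theorem or_iff2 : QPrf (imp (cn β (and (cn β a) (cn β b))) (or a b)) := by
  refine tr (cn_anti ?_) dne
  exact andI (cn_anti (ax6 _ _)) (cn_anti (ax7 _ _))

theorem imp_iff1 : QPrf (imp (imp a b) (or (cn β a) b)) := by
  have h : QPrf (or (imp a (botF β)) a) := ax9 _ _
  have h1 : QPrf (imp (imp a (botF β)) (imp (imp a b) (or (cn β a) b))) :=
    tr (ax6 _ _) (ax1 _ _)
  have h2 : QPrf (imp a (imp (imp a b) (or (cn β a) b))) :=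
    curry (tr (ss (ax5 _ _) (ax4 _ _)) (ax7 _ _))
  exact mp (orE h1 h2) h

theorem imp_iff2 : QPrf (imp (or (cn β a) b) (imp a b)) :=
  orE (curry (tr (ss (ax4 _ _) (ax5 _ _)) (botE _))) (ax1 _ _)

/-! ## The complete Boolean algebra -/

/-- Consistent formulas. -/
def Pos (β : FForm C F P) : Type := {a : FForm C F P // ¬ QPrf (imp a (botF β))}

instance : Preorder (Pos β) where
  le a b := QPrf (imp a.1 b.1)
  le_refl a := idd _
  le_trans _ _ _ h h' := tr h h'

/-- Regular lower sets of consistent formulas. -/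
def RA (β : FForm C F P) : Type := Heyting.Regular (LowerSet (Pos β))

noncomputable instance instRA : CompleteBooleanAlgebra (RA β) where
  __ := (inferInstance : BooleanAlgebra (Heyting.Regular (LowerSet (Pos β))))
  __ := (Heyting.Regular.gi (α := LowerSet (Pos β))).liftCompleteLattice

/-- The principal lower set. -/
def iL (β a : FForm C F P) : LowerSet (Pos β) := ⟨{c | QPrf (imp c.1 a)}, fun _ _ h h' => tr h h'⟩

theorem mem_iL (c : Pos β) : c ∈ iL β a ↔ QPrf (imp c.1 a) := Iff.rfl

theorem iL_le : iL β a ≤ iL β b ↔ QPrf (imp a b) := by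
  constructor
  · intro h
    by_cases ha : QPrf (imp a (botF β))
    · exact tr ha (botE _)
    · exact h (show (⟨a, ha⟩ : Pos β) ∈ iL β a from idd a)
  · intro h c hc
    exact tr hc h

theorem iL_compl : (iL β a)ᶜ = iL β (cn β a) := by
  ext c
  have h0 : c ∈ (iL β a)ᶜ ↔ Disjoint (LowerSet.Iic c) (iL β a) := by
    rw [← le_compl_iff_disjoint_right, LowerSet.Iic_le]
  have h1 : c ∈ (iL β a)ᶜ ↔ c ∈ iL β (cn β a) := by
    rw [h0, mem_iL]
    constructor
    · intro h
      by_contra hc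
      have hp : ¬ QPrf (imp (and c.1 a) (botF β)) := fun h' => hc (curry h')
      have h2 := h.le_bot
      have h3 : (⟨_, hp⟩ : Pos β) ∈ LowerSet.Iic c ⊓ iL β a :=
        ⟨show QPrf _ from ax4 _ _, show QPrf _ from ax5 _ _⟩
      exact h2 h3
    · intro h
      rw [disjoint_iff_inf_le]
      rintro d ⟨hd, hd'⟩
      exact (d.2 (ss (tr hd h) hd')).elim
  exact h1

/-- The embedding of formulas. -/
def io (β a : FForm C F P) : RA β := ⟨iL β a, by
  rw [Heyting.IsRegular, iL_compl, iL_compl]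
  exact le_antisymm (iL_le.2 dne) (iL_le.2 dni)⟩

theorem io_le : io β a ≤ io β b ↔ QPrf (imp a b) := iL_le

theorem io_compl : (io β a)ᶜ = io β (cn β a) := Subtype.ext iL_compl

theorem io_and : io β (and a b) = io β a ⊓ io β b :=
  le_antisymm (le_inf (io_le.2 (ax4 _ _)) (io_le.2 (ax5 _ _)))
    (fun _ hc => andI hc.1 hc.2)

theorem io_or : io β (or a b) = io β a ⊔ io β b := by
  have : io β a ⊔ io β b = io β (cn β (and (cn β a) (cn β b))) := by
    rw [← io_compl, io_and, ← io_compl, ← io_compl]; simp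
  rw [this]
  exact le_antisymm (io_le.2 or_iff1) (io_le.2 or_iff2)

theorem io_imp : io β (imp a b) = (io β a)ᶜ ⊔ io β b := by
  rw [io_compl, ← io_or]
  exact le_antisymm (io_le.2 imp_iff1) (io_le.2 imp_iff2)

theorem io_top : io β a = ⊤ ↔ QPrf a := by
  constructor
  · intro h
    have : io β (imp a a) ≤ io β a := by rw [h]; exact le_top
    exact mp (io_le.1 this) (idd _)
  · intro h
    rw [eq_top_iff]
    intro c _
    exact kk h

theorem io_bot : io β (botF β) = ⊥ := by
  rw [eq_bot_iff]
  intro c hc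
  exact (c.2 hc).elim

theorem le_io_iff (X : RA β) : X ≤ io β a ↔ ∀ c ∈ Heyting.Regular.val X, QPrf (imp c.1 a) := Iff.rfl

theorem io_iInf {ι : Type} (f : ι → FForm C F P)
    (h : ∀ c, (∀ i, QPrf (imp c (f i))) ↔ QPrf (imp c a)) :
    io β a = ⨅ i, io β (f i) := by
  refine le_antisymm (le_iInf fun i => io_le.2 ((h a).2 (idd a) i)) ?_
  rw [le_io_iff]
  intro c hc
  refine (h c.1).1 fun i => ?_
  have : (⨅ i, io β (f i)) ≤ io β (f i) := iInf_le _ i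
  exact (le_io_iff _).1 this c hc

theorem io_iSup {ι : Type} (f : ι → FForm C F P)
    (h : ∀ c, (∀ i, QPrf (imp (f i) c)) ↔ QPrf (imp a c)) :
    io β a = ⨆ i, io β (f i) := by
  rw [← compl_inj_iff, compl_iSup, io_compl]
  simp only [io_compl]
  apply io_iInf
  intro c
  constructor
  · intro h'
    exact flip ((h _).1 fun i => flip (h' i))
  · intro h' i
    exact flip ((h _).2 (flip h') i)

open Classical in
/-- The negation operation. -/
noncomputable def nOp (β : FForm C F P) (X : RA β) : RA β :=
  if h : ∃ a, X = io β a then io β (neg h.choose) else Xᶜ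

open Classical in
/-- The consistency operation. -/
noncomputable def cOp (β : FForm C F P) (X : RA β) : RA β :=
  if h : ∃ a, X = io β a then io β (circ h.choose) else ⊤

theorem iff_of_io (h : io β a = io β b) : QPrf (iffF a b) :=
  iffI (io_le.1 h.le) (io_le.1 h.ge)

theorem io_of_iff (h : QPrf (iffF a b)) : io β a = io β b :=
  le_antisymm (io_le.2 (iff1 h)) (io_le.2 (iff2 h))

theorem nOp_io : nOp β (io β a) = io β (neg a) := by
  have h : ∃ b, io β a = io β b := ⟨a, rfl⟩
  rw [nOp, dif_pos h]
  exact (io_of_iff (rneg (iff_of_io h.choose_spec))).symm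

theorem cOp_io : cOp β (io β a) = io β (circ a) := by
  have h : ∃ b, io β a = io β b := ⟨a, rfl⟩
  rw [cOp, dif_pos h]
  exact (io_of_iff (rcirc (iff_of_io h.choose_spec))).symm

theorem isBALFI_Op : IsBALFI (nOp β) (cOp β) := by
  constructor
  · intro X
    by_cases h : ∃ a, X = io β a
    · obtain ⟨a, rfl⟩ := h
      rw [nOp_io, ← io_or, io_top]
      exact ax10 a
    · rw [nOp, dif_neg h]; simp
  · intro X
    by_cases h : ∃ a, X = io β a
    · obtain ⟨a, rfl⟩ := h
      rw [nOp_io, cOp_io, ← io_and, ← io_and, eq_bot_iff, ← io_bot, io_le]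
      refine tr (andI (tr (ax4 _ _) (ax4 _ _)) (andI (tr (ax4 _ _) (ax5 _ _)) (ax5 _ _)))
        (contraF a _)
    · rw [nOp, dif_neg h]; simp

/-! ## Substitution -/

/-- Simultaneous substitution in terms. -/
def tsub (μ : ℕ → FTerm C F) : FTerm C F → FTerm C F
  | .var x => μ x
  | .const c => .const c
  | .func f ts => .func f (fun i => tsub μ (ts i))

/-- Simultaneous substitution in formulas (without renaming of bound variables). -/
def fsub : FForm C F P → (ℕ → FTerm C F) → FForm C F P
  | .rel p ts, μ => .rel p (fun i => tsub μ (ts i))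
  | .and a b, μ => .and (fsub a μ) (fsub b μ)
  | .or a b, μ => .or (fsub a μ) (fsub b μ)
  | .imp a b, μ => .imp (fsub a μ) (fsub b μ)
  | .neg a, μ => .neg (fsub a μ)
  | .circ a, μ => .circ (fsub a μ)
  | .all x a, μ => .all x (fsub a (Function.update μ x (.var x)))
  | .ex x a, μ => .ex x (fsub a (Function.update μ x (.var x)))

/-- A strict bound on the bound variables. -/
def maxb : FForm C F P → ℕ
  | .rel _ _ => 0
  | .and a b => max (maxb a) (maxb b)
  | .or a b => max (maxb a) (maxb b)
  | .imp a b => max (maxb a) (maxb b)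
  | .neg a => maxb a
  | .circ a => maxb a
  | .all x a => max (x + 1) (maxb a)
  | .ex x a => max (x + 1) (maxb a)

theorem vars_finite (t : FTerm C F) : t.vars.Finite := by
  induction t with
  | var x => exact Set.finite_singleton x
  | const c => exact Set.finite_empty
  | func f ts ih => exact Set.finite_iUnion ih

theorem fv_finite (a : FForm C F P) : (fv a).Finite := by
  induction a with
  | rel p ts => exact Set.finite_iUnion fun i => vars_finite _
  | and a b iha ihb => exact iha.union ihb
  | or a b iha ihb => exact iha.union ihb
  | imp a b iha ihb => exact iha.union ihb
  | neg a ih => exact ih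
  | circ a ih => exact ih
  | all x a ih => exact ih.sdiff
  | ex x a ih => exact ih.sdiff

theorem vars_tsub (μ : ℕ → FTerm C F) (t : FTerm C F) {w : ℕ} (h : w ∈ (tsub μ t).vars) :
    ∃ v ∈ t.vars, w ∈ (μ v).vars := by
  induction t with
  | var x => exact ⟨x, rfl, h⟩
  | const c => exact h.elim
  | func f ts ih =>
    obtain ⟨i, hi⟩ := Set.mem_iUnion.1 h
    obtain ⟨v, hv, hw⟩ := ih i hi
    exact ⟨v, Set.mem_iUnion.2 ⟨i, hv⟩, hw⟩

theorem tsub_congr {μ μ' : ℕ → FTerm C F} (t : FTerm C F) (h : ∀ v ∈ t.vars, μ v = μ' v) :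
    tsub μ t = tsub μ' t := by
  induction t with
  | var x => exact h x rfl
  | const c => rfl
  | func f ts ih =>
    simp only [tsub]
    congr 1
    funext i
    exact ih i fun v hv => h v (Set.mem_iUnion.2 ⟨i, hv⟩)

theorem tsub_var (t : FTerm C F) : tsub FTerm.var t = t := by
  induction t with
  | var x => rfl
  | const c => rfl
  | func f ts ih => simp only [tsub, ih]

theorem tsub_tsub (μ ν : ℕ → FTerm C F) (t : FTerm C F) :
    tsub μ (tsub ν t) = tsub (fun n => tsub μ (ν n)) t := by
  induction t with
  | var x => rfl
  | const c => rfl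
  | func f ts ih => simp only [tsub, ih]

theorem tsubst_eq (z : ℕ) (s t : FTerm C F) :
    FTerm.tsubst z s t = tsub (Function.update FTerm.var z s) t := by
  induction t with
  | var x => simp only [FTerm.tsubst, tsub, Function.update_apply]
  | const c => rfl
  | func f ts ih => simp only [tsub, FTerm.tsubst, ih]

theorem tsubst_of_notMem {z : ℕ} {s t : FTerm C F} (h : z ∉ t.vars) :
    FTerm.tsubst z s t = t := by
  rw [tsubst_eq]
  conv_rhs => rw [← tsub_var t]
  apply tsub_congr
  intro v hv
  rw [Function.update_of_ne]
  rintro rfl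
  exact h hv

theorem tsubst_tsub {z : ℕ} {s : FTerm C F} {μ μ' : ℕ → FTerm C F} (t : FTerm C F)
    (h : ∀ v ∈ t.vars, FTerm.tsubst z s (μ v) = μ' v) :
    FTerm.tsubst z s (tsub μ t) = tsub μ' t := by
  rw [tsubst_eq, tsub_tsub]
  apply tsub_congr
  intro v hv
  rw [← tsubst_eq, h v hv]

theorem update_var_congr {μ μ' : ℕ → FTerm C F} {x : ℕ} {s : Set ℕ}
    (h : ∀ v ∈ s \ {x}, μ v = μ' v) :
    ∀ v ∈ s, Function.update μ x (.var x) v = Function.update μ' x (.var x) v := by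
  intro v hv
  by_cases hx : v = x
  · subst hx; simp
  · simp only [Function.update_of_ne hx]
    exact h v ⟨hv, hx⟩

theorem fsub_congr (a : FForm C F P) : ∀ {μ μ' : ℕ → FTerm C F},
    (∀ v ∈ fv a, μ v = μ' v) → fsub a μ = fsub a μ' := by
  induction a with
  | rel p ts =>
    intro μ μ' h
    simp only [fsub]
    congr 1
    funext i
    exact tsub_congr _ fun v hv => h v (Set.mem_iUnion.2 ⟨i, hv⟩)
  | and a b iha ihb =>
    intro μ μ' h
    simp only [fsub]
    rw [iha fun v hv => h v (Or.inl hv), ihb fun v hv => h v (Or.inr hv)]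
  | or a b iha ihb =>
    intro μ μ' h
    simp only [fsub]
    rw [iha fun v hv => h v (Or.inl hv), ihb fun v hv => h v (Or.inr hv)]
  | imp a b iha ihb =>
    intro μ μ' h
    simp only [fsub]
    rw [iha fun v hv => h v (Or.inl hv), ihb fun v hv => h v (Or.inr hv)]
  | neg a ih =>
    intro μ μ' h
    simp only [fsub]
    rw [ih h]
  | circ a ih =>
    intro μ μ' h
    simp only [fsub]
    rw [ih h]
  | all x a ih =>
    intro μ μ' h
    simp only [fsub]
    rw [ih (update_var_congr h)]
  | ex x a ih =>
    intro μ μ' h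
    simp only [fsub]
    rw [ih (update_var_congr h)]

theorem fsub_var (a : FForm C F P) : fsub a FTerm.var = a := by
  induction a with
  | rel p ts => simp only [fsub, tsub_var]
  | and a b iha ihb => simp only [fsub, iha, ihb]
  | or a b iha ihb => simp only [fsub, iha, ihb]
  | imp a b iha ihb => simp only [fsub, iha, ihb]
  | neg a ih => simp only [fsub, ih]
  | circ a ih => simp only [fsub, ih]
  | all x a ih => simp only [fsub, Function.update_eq_self, ih]
  | ex x a ih => simp only [fsub, Function.update_eq_self, ih]

theorem fv_fsub_aux {μ : ℕ → FTerm C F} {x w : ℕ} {s : Set ℕ} (hw : w ≠ x)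
    (h : ∃ v ∈ s, w ∈ (Function.update μ x (.var x) v).vars) :
    ∃ v ∈ s \ {x}, w ∈ (μ v).vars := by
  obtain ⟨v, hv, hwv⟩ := h
  by_cases hx : v = x
  · subst hx
    rw [Function.update_self] at hwv
    exact (hw hwv).elim
  · rw [Function.update_of_ne hx] at hwv
    exact ⟨v, ⟨hv, hx⟩, hwv⟩

theorem fv_fsub_or {μ : ℕ → FTerm C F} {w : ℕ} {s t s' t' : Set ℕ}
    (h1 : w ∈ s' → ∃ v ∈ s, w ∈ (μ v).vars) (h2 : w ∈ t' → ∃ v ∈ t, w ∈ (μ v).vars)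
    (h : w ∈ s' ∪ t') : ∃ v ∈ s ∪ t, w ∈ (μ v).vars := by
  rcases h with h | h
  · obtain ⟨v, hv, hw⟩ := h1 h
    exact ⟨v, Or.inl hv, hw⟩
  · obtain ⟨v, hv, hw⟩ := h2 h
    exact ⟨v, Or.inr hv, hw⟩

theorem fv_fsub (a : FForm C F P) : ∀ {μ : ℕ → FTerm C F} {w : ℕ},
    w ∈ fv (fsub a μ) → ∃ v ∈ fv a, w ∈ (μ v).vars := by
  induction a with
  | rel p ts =>
    intro μ w h
    obtain ⟨i, hi⟩ := Set.mem_iUnion.1 h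
    obtain ⟨v, hv, hw⟩ := vars_tsub _ _ hi
    exact ⟨v, Set.mem_iUnion.2 ⟨i, hv⟩, hw⟩
  | and a b iha ihb => exact fun h => fv_fsub_or iha ihb h
  | or a b iha ihb => exact fun h => fv_fsub_or iha ihb h
  | imp a b iha ihb => exact fun h => fv_fsub_or iha ihb h
  | neg a ih => exact fun h => ih h
  | circ a ih => exact fun h => ih h
  | all x a ih => exact fun h => fv_fsub_aux h.2 (ih h.1)
  | ex x a ih => exact fun h => fv_fsub_aux h.2 (ih h.1)

theorem freeFor_fsub (t : FTerm C F) (z : ℕ) (a : FForm C F P) : ∀ {μ : ℕ → FTerm C F},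
    (∀ w ∈ t.vars, maxb a ≤ w) → FreeFor t z (fsub a μ) := by
  induction a with
  | rel p ts => exact fun _ => trivial
  | and a b iha ihb =>
    exact fun h => ⟨iha fun w hw => (le_max_left _ _).trans (h w hw),
      ihb fun w hw => (le_max_right _ _).trans (h w hw)⟩
  | or a b iha ihb =>
    exact fun h => ⟨iha fun w hw => (le_max_left _ _).trans (h w hw),
      ihb fun w hw => (le_max_right _ _).trans (h w hw)⟩
  | imp a b iha ihb =>
    exact fun h => ⟨iha fun w hw => (le_max_left _ _).trans (h w hw),
      ihb fun w hw => (le_max_right _ _).trans (h w hw)⟩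
  | neg a ih => exact fun h => ih h
  | circ a ih => exact fun h => ih h
  | all x a ih =>
    refine fun h => Or.inr ⟨fun hx => ?_, ih fun w hw => (le_max_right _ _).trans (h w hw)⟩
    exact absurd ((le_max_left _ _).trans (h x hx)) (by omega)
  | ex x a ih =>
    refine fun h => Or.inr ⟨fun hx => ?_, ih fun w hw => (le_max_right _ _).trans (h w hw)⟩
    exact absurd ((le_max_left _ _).trans (h x hx)) (by omega)

theorem update_fresh {μ : ℕ → FTerm C F} {x z w : ℕ} {s : Set ℕ} (hwz : w ≠ z)
    (h : ∀ v ∈ s \ {w}, v ≠ x → z ∉ (μ v).vars) :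
    ∀ v ∈ s, v ≠ x → z ∉ (Function.update μ w (.var w) v).vars := by
  intro v hv hvx
  by_cases hx : v = w
  · subst hx
    rw [Function.update_self]
    exact fun h => hwz h.symm
  · rw [Function.update_of_ne hx]
    exact h v ⟨hv, hx⟩ hvx

theorem freeFor_var_aux {μ : ℕ → FTerm C F} {x z w : ℕ} {a : FForm C F P} (hw : w ≠ z)
    (h : ∀ v ∈ fv a \ {w}, v ≠ x → z ∉ (μ v).vars)
    (ih : FreeFor (.var x) z (fsub a (Function.update μ w (.var w)))) :
    z ∉ fv (fsub a (Function.update μ w (.var w))) \ {w} ∨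
      (w ∉ (FTerm.var x : FTerm C F).vars ∧
        FreeFor (.var x) z (fsub a (Function.update μ w (.var w)))) := by
  by_cases hwx : w = x
  · subst hwx
    left
    rintro ⟨hz, hzw⟩
    obtain ⟨v, hv, hzv⟩ := fv_fsub_aux hzw (fv_fsub a hz)
    exact h v hv hv.2 hzv
  · exact Or.inr ⟨hwx, ih⟩

theorem freeFor_var (x z : ℕ) (a : FForm C F P) : ∀ {μ : ℕ → FTerm C F},
    maxb a ≤ z → (∀ v ∈ fv a, v ≠ x → z ∉ (μ v).vars) →
    FreeFor (.var x) z (fsub a μ) := by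
  induction a with
  | rel p ts => exact fun _ _ => trivial
  | and a b iha ihb =>
    exact fun h h' => ⟨iha ((le_max_left _ _).trans h) fun v hv => h' v (Or.inl hv),
      ihb ((le_max_right _ _).trans h) fun v hv => h' v (Or.inr hv)⟩
  | or a b iha ihb =>
    exact fun h h' => ⟨iha ((le_max_left _ _).trans h) fun v hv => h' v (Or.inl hv),
      ihb ((le_max_right _ _).trans h) fun v hv => h' v (Or.inr hv)⟩
  | imp a b iha ihb =>
    exact fun h h' => ⟨iha ((le_max_left _ _).trans h) fun v hv => h' v (Or.inl hv),
      ihb ((le_max_right _ _).trans h) fun v hv => h' v (Or.inr hv)⟩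
  | neg a ih => exact fun h h' => ih h h'
  | circ a ih => exact fun h h' => ih h h'
  | all w a ih =>
    intro μ h h'
    have hw : w + 1 ≤ z := (le_max_left _ _).trans h
    have hw' : w ≠ z := by omega
    exact freeFor_var_aux hw' h' (ih ((le_max_right _ _).trans h) (update_fresh hw' h'))
  | ex w a ih =>
    intro μ h h'
    have hw : w + 1 ≤ z := (le_max_left _ _).trans h
    have hw' : w ≠ z := by omega
    exact freeFor_var_aux hw' h' (ih ((le_max_right _ _).trans h) (update_fresh hw' h'))

theorem subst_aux {z w : ℕ} {s : FTerm C F} {μ μ' : ℕ → FTerm C F} {a : FForm C F P}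
    (ih : ∀ {μ μ' : ℕ → FTerm C F},
      (∀ v ∈ fv a, FTerm.tsubst z s (μ v) = μ' v) →
      (maxb a ≤ z ∨ ∀ v ∈ fv a, v ≠ z → z ∉ (μ v).vars) →
      subst z s (fsub a μ) = fsub a μ')
    (h : ∀ v ∈ fv a \ {w}, FTerm.tsubst z s (μ v) = μ' v)
    (h' : max (w + 1) (maxb a) ≤ z ∨ ∀ v ∈ fv a \ {w}, v ≠ z → z ∉ (μ v).vars) :
    (w = z → fsub a (Function.update μ w (.var w)) = fsub a (Function.update μ' w (.var w))) ∧
    (w ≠ z → subst z s (fsub a (Function.update μ w (.var w)))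
      = fsub a (Function.update μ' w (.var w))) := by
  constructor
  · rintro rfl
    have h2 : ∀ v ∈ fv a \ {w}, v ≠ w → w ∉ (μ v).vars := by
      rcases h' with h' | h'
      · have : w + 1 ≤ w := (le_max_left _ _).trans h'
        omega
      · exact h'
    apply fsub_congr
    apply update_var_congr
    intro v hv
    rw [← h v hv, tsubst_of_notMem (h2 v hv hv.2)]
  · intro hw
    apply ih
    · intro v hv
      by_cases hvw : v = w
      · subst hvw
        simp [FTerm.tsubst, hw]
      · simp only [Function.update_of_ne hvw]
        exact h v ⟨hv, hvw⟩
    · rcases h' with h' | h'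
      · exact Or.inl ((le_max_right _ _).trans h')
      · exact Or.inr (update_fresh hw h')

theorem subst_fsub (z : ℕ) (s : FTerm C F) (a : FForm C F P) : ∀ {μ μ' : ℕ → FTerm C F},
    (∀ v ∈ fv a, FTerm.tsubst z s (μ v) = μ' v) →
    (maxb a ≤ z ∨ ∀ v ∈ fv a, v ≠ z → z ∉ (μ v).vars) →
    subst z s (fsub a μ) = fsub a μ' := by
  induction a with
  | rel p ts =>
    intro μ μ' h _
    simp only [fsub, subst]
    congr 1
    funext i
    exact tsubst_tsub _ fun v hv => h v (Set.mem_iUnion.2 ⟨i, hv⟩)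
  | and a b iha ihb =>
    intro μ μ' h h'
    simp only [fsub, subst]
    rw [iha (fun v hv => h v (Or.inl hv))
        (h'.imp ((le_max_left _ _).trans ·) (fun h v hv => h v (Or.inl hv))),
      ihb (fun v hv => h v (Or.inr hv))
        (h'.imp ((le_max_right _ _).trans ·) (fun h v hv => h v (Or.inr hv)))]
  | or a b iha ihb =>
    intro μ μ' h h'
    simp only [fsub, subst]
    rw [iha (fun v hv => h v (Or.inl hv))
        (h'.imp ((le_max_left _ _).trans ·) (fun h v hv => h v (Or.inl hv))),
      ihb (fun v hv => h v (Or.inr hv))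
        (h'.imp ((le_max_right _ _).trans ·) (fun h v hv => h v (Or.inr hv)))]
  | imp a b iha ihb =>
    intro μ μ' h h'
    simp only [fsub, subst]
    rw [iha (fun v hv => h v (Or.inl hv))
        (h'.imp ((le_max_left _ _).trans ·) (fun h v hv => h v (Or.inl hv))),
      ihb (fun v hv => h v (Or.inr hv))
        (h'.imp ((le_max_right _ _).trans ·) (fun h v hv => h v (Or.inr hv)))]
  | neg a ih =>
    intro μ μ' h h'
    simp only [fsub, subst]
    rw [ih h h']
  | circ a ih =>
    intro μ μ' h h'
    simp only [fsub, subst]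
    rw [ih h h']
  | all w a ih =>
    intro μ μ' h h'
    obtain ⟨h1, h2⟩ := subst_aux ih h h'
    simp only [fsub, subst]
    split_ifs with hw
    · rw [h1 hw]
    · rw [h2 hw]
  | ex w a ih =>
    intro μ μ' h h'
    obtain ⟨h1, h2⟩ := subst_aux ih h h'
    simp only [fsub, subst]
    split_ifs with hw
    · rw [h1 hw]
    · rw [h2 hw]

/-- Shift the variables of a term. -/
def sh (N : ℕ) (t : FTerm C F) : FTerm C F := tsub (fun n => .var (n + N)) t

theorem vars_sh {N : ℕ} {t : FTerm C F} : ∀ w ∈ (sh N t).vars, N ≤ w := by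
  intro w hw
  obtain ⟨v, _, h⟩ := vars_tsub _ _ hw
  have : w = v + N := h
  omega

section Quant

variable {N x : ℕ} {μ : ℕ → FTerm C F}

theorem inst_free (hN : maxb a ≤ N) (u : FTerm C F) :
    FreeFor (sh N u) x (fsub a (Function.update μ x (.var x))) :=
  freeFor_fsub _ _ _ fun w hw => hN.trans (vars_sh w hw)

theorem inst_subst (hx : x < N) (hμ : ∀ v, ∀ w ∈ (μ v).vars, N ≤ w) (u : FTerm C F) :
    subst x (sh N u) (fsub a (Function.update μ x (.var x))) =
      fsub a (Function.update μ x (sh N u)) := by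
  have hn : ∀ v, x ∉ (μ v).vars := fun v h => absurd (hμ v x h) (by omega)
  apply subst_fsub
  · intro v _
    by_cases hv : v = x
    · subst hv; simp [FTerm.tsubst]
    · simp only [Function.update_of_ne hv]
      exact tsubst_of_notMem (hn v)
  · right
    intro v _ hv
    rw [Function.update_of_ne hv]
    exact hn v

theorem exists_fresh (c a : FForm C F P) (N : ℕ) (μ : ℕ → FTerm C F) :
    ∃ k, k + N ∉ fv c ∧ ∀ v ∈ fv a, k + N ∉ (μ v).vars := by
  have hf : (fv c ∪ ⋃ v ∈ fv a, (μ v).vars).Finite :=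
    (fv_finite c).union ((fv_finite a).biUnion fun v _ => vars_finite _)
  obtain ⟨M, hM⟩ := hf.bddAbove
  have h : M + 1 + N ∉ fv c ∪ ⋃ v ∈ fv a, (μ v).vars := fun h => by
    have := hM h
    omega
  refine ⟨M + 1, fun h' => h (Or.inl h'), fun v hv h' => h (Or.inr ?_)⟩
  exact Set.mem_biUnion hv h'

theorem fresh_facts (hN : maxb a ≤ N) (hx : x < N) (hμ : ∀ v, ∀ w ∈ (μ v).vars, N ≤ w)
    {z : ℕ} (hz : N ≤ z) (hza : ∀ v ∈ fv a, z ∉ (μ v).vars) :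
    FreeFor (.var x) z (fsub a (Function.update μ x (.var z))) ∧
    subst z (.var x) (fsub a (Function.update μ x (.var z))) =
      fsub a (Function.update μ x (.var x)) ∧
    x ∉ fv (fsub a (Function.update μ x (.var z))) := by
  refine ⟨?_, ?_, ?_⟩
  · apply freeFor_var _ _ _ (hN.trans hz)
    intro v hv hvx
    rw [Function.update_of_ne hvx]
    exact hza v hv
  · apply subst_fsub
    · intro v hv
      by_cases hvx : v = x
      · subst hvx; simp [FTerm.tsubst]
      · simp only [Function.update_of_ne hvx]
        exact tsubst_of_notMem (hza v hv)
    · exact Or.inl (hN.trans hz)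
  · intro h
    obtain ⟨v, _, hw⟩ := fv_fsub _ h
    by_cases hvx : v = x
    · subst hvx
      rw [Function.update_self] at hw
      have : v = z := hw
      omega
    · rw [Function.update_of_ne hvx] at hw
      have := hμ v x hw
      omega

theorem all_glb (hN : maxb a ≤ N) (hx : x < N) (hμ : ∀ v, ∀ w ∈ (μ v).vars, N ≤ w)
    (c : FForm C F P) :
    (∀ u : FTerm C F, QPrf (imp c (fsub a (Function.update μ x (sh N u))))) ↔
      QPrf (imp c (all x (fsub a (Function.update μ x (.var x))))) := by
  constructor
  · intro h
    obtain ⟨k, hkc, hka⟩ := exists_fresh c a N μ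
    have h1 : QPrf (imp c (fsub a (Function.update μ x (.var (k + N))))) := h (.var k)
    obtain ⟨f1, f2, f3⟩ := fresh_facts hN hx hμ (Nat.le_add_left N k) hka
    have h3 := axAll _ _ _ f1
    rw [f2] at h3
    exact tr (allIn _ h1 hkc) (allIn x h3 fun h => f3 h.1)
  · intro h u
    have := axAll _ _ _ (inst_free (x := x) (μ := μ) hN u)
    rw [inst_subst hx hμ] at this
    exact tr h this

theorem ex_lub (hN : maxb a ≤ N) (hx : x < N) (hμ : ∀ v, ∀ w ∈ (μ v).vars, N ≤ w)
    (c : FForm C F P) :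
    (∀ u : FTerm C F, QPrf (imp (fsub a (Function.update μ x (sh N u))) c)) ↔
      QPrf (imp (ex x (fsub a (Function.update μ x (.var x)))) c) := by
  constructor
  · intro h
    obtain ⟨k, hkc, hka⟩ := exists_fresh c a N μ
    have h1 : QPrf (imp (fsub a (Function.update μ x (.var (k + N)))) c) := h (.var k)
    obtain ⟨f1, f2, f3⟩ := fresh_facts hN hx hμ (Nat.le_add_left N k) hka
    have h3 := axEx _ _ _ f1
    rw [f2] at h3
    exact tr (exIn x h3 fun h => f3 h.1) (exIn _ h1 hkc)
  · intro h u
    have := axEx _ _ _ (inst_free (x := x) (μ := μ) hN u)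
    rw [inst_subst hx hμ] at this
    exact tr this h

end Quant

/-! ## The canonical structure -/

theorem tden_eq (μ : ℕ → FTerm C F) (t : FTerm C F) :
    tden (fun c => FTerm.const c) (fun _ f ts => FTerm.func f ts) μ t = tsub μ t := by
  induction t with
  | var x => rfl
  | const c => rfl
  | func f ts ih => simp only [tden, tsub, ih]

theorem sh_update (N x : ℕ) (ν : ℕ → FTerm C F) (u : FTerm C F) :
    (fun n => sh N (Function.update ν x u n)) =
      Function.update (fun n => sh N (ν n)) x (sh N u) := by
  funext n
  by_cases h : n = x
  · subst h; simp
  · simp [Function.update_of_ne h]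

theorem fint_eq (β : FForm C F P) (N : ℕ) (a : FForm C F P) : ∀ (ν : ℕ → FTerm C F),
    maxb a ≤ N →
    fint (nOp β) (cOp β) (fun c => FTerm.const c) (fun _ f ts => FTerm.func f ts)
      (fun _ p ts => io β (rel p fun i => sh N (ts i))) a ν =
    io β (fsub a fun n => sh N (ν n)) := by
  induction a with
  | rel p ts =>
    intro ν _
    simp only [fint, fsub, tden_eq]
    simp only [sh, tsub_tsub]
  | and a b iha ihb =>
    intro ν h
    simp only [fint, fsub]
    rw [iha ν ((le_max_left _ _).trans h), ihb ν ((le_max_right _ _).trans h), io_and]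
  | or a b iha ihb =>
    intro ν h
    simp only [fint, fsub]
    rw [iha ν ((le_max_left _ _).trans h), ihb ν ((le_max_right _ _).trans h), io_or]
  | imp a b iha ihb =>
    intro ν h
    simp only [fint, fsub]
    rw [iha ν ((le_max_left _ _).trans h), ihb ν ((le_max_right _ _).trans h), io_imp]
  | neg a ih =>
    intro ν h
    simp only [fint, fsub]
    rw [ih ν h, nOp_io]
  | circ a ih =>
    intro ν h
    simp only [fint, fsub]
    rw [ih ν h, cOp_io]
  | all x a ih =>
    intro ν h
    have hx : x + 1 ≤ N := (le_max_left _ _).trans h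
    have ha : maxb a ≤ N := (le_max_right _ _).trans h
    simp only [fint, fsub]
    rw [io_iInf (fun u => fsub a (Function.update (fun n => sh N (ν n)) x (sh N u)))
      (all_glb ha hx fun v => vars_sh)]
    refine iInf_congr fun u => ?_
    rw [ih _ ha, sh_update]
  | ex x a ih =>
    intro ν h
    have hx : x + 1 ≤ N := (le_max_left _ _).trans h
    have ha : maxb a ≤ N := (le_max_right _ _).trans h
    simp only [fint, fsub]
    rw [io_iSup (fun u => fsub a (Function.update (fun n => sh N (ν n)) x (sh N u)))
      (ex_lub ha hx fun v => vars_sh)]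
    refine iSup_congr fun u => ?_
    rw [ih _ ha, sh_update]

theorem prf_of_valid (φ : FForm C F P) (hφ : fv φ = ∅) (h : QValid φ) : QPrf φ := by
  have h1 := h (FTerm C F) ⟨.var 0⟩ (RA φ) (nOp φ) (cOp φ) isBALFI_Op
    (fun c => FTerm.const c) (fun _ f ts => FTerm.func f ts)
    (fun _ p ts => io φ (rel p fun i => sh (maxb φ) (ts i))) FTerm.var
  rw [fint_eq φ (maxb φ) φ _ le_rfl, io_top] at h1
  rwa [fsub_congr φ (μ' := FTerm.var) (by simp [hφ]), fsub_var] at h1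

theorem fv_conjL (l : List (FForm C F P)) : ∀ γ : FForm C F P, fv γ = ∅ →
    (∀ ψ ∈ l, fv ψ = ∅) → fv (conjL γ l) = ∅ := by
  induction l with
  | nil => exact fun γ h _ => h
  | cons ψ l ih =>
    intro γ h h'
    have := ih ψ (h' ψ (by simp)) fun χ hχ => h' χ (by simp [hχ])
    simp only [conjL, fv, h, this, Set.union_self]

end Completeness

/-- Theorem 8.20, Completeness of RQmbC w.r.t. BALFI semantics: for
sentences (closed formulas) `Γ ∪ {φ}`, if `Γ ⊨_RQmbC φ` then `Γ ⊢_RQmbC φ`. -/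
theorem rqmbc_completeness
    (C : Type) (F P : ℕ → Type)
    [Countable C] [∀ n, Countable (F n)] [∀ n, Countable (P n)]
    (hP : ∃ n, Nonempty (P n))
    (Γ : Set (FForm C F P)) (φ : FForm C F P)
    (hφ : FForm.fv φ = ∅) (hΓ : ∀ γ ∈ Γ, FForm.fv γ = ∅)
    (h : QConseq Γ φ) : QDeriv Γ φ := by
  rcases h with h | ⟨γ, l, hγ, hl, h⟩
  · exact Or.inl (prf_of_valid φ hφ h)
  · refine Or.inr ⟨γ, l, hγ, hl, prf_of_valid _ ?_ h⟩
    have := fv_conjL l γ (hΓ γ hγ) fun ψ hψ => hΓ ψ (hl ψ hψ)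
    simp only [fv, this, hφ, Set.union_self]

end LFI
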